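/- In any liquid democracy game there is an optimal pure delegation graph that is a disjoint union of jolly stars: there exists a pure profile x* achieving social welfare OPT such that every agent either votes herself, or delegates directly to an agent j who votes herself with u_{ij} > 0 (in particular, no agent abstains and every delegation chain has length at most one). -/

import Mathlib

open Finset

/-- The guru of agent `i` under pure profile `s` (where `s i = some j` means `i`
delegates to `j`, with `s i = some i` meaning `i` votes herself, and `s i = none`
meaning `i` abstains): follow delegation arcs for `n` steps; the endpoint is the
guru provided it votes itself. -/
def guru {n : ℕ} (s : Fin n → Option (Fin n)) (i : Fin n) : Option (Fin n) :=
  ((fun o => Option.bind o s)^[n] (some i)).bind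
    (fun j => if s j = some j then some j else none)

/-- Utility of agent `i` in the pure profile `s`: `u i (g i)` if the guru exists, else `0`. -/
def pureUtil {n : ℕ} (u : Fin n → Fin n → ℝ) (s : Fin n → Option (Fin n)) (i : Fin n) : ℝ :=
  (guru s i).elim 0 (u i)

/-- A mixed strategy for a single agent: nonnegative, total probability at most one
(the residual probability is abstention). -/
def IsStrat {n : ℕ} (y : Fin n → ℝ) : Prop := (∀ j, 0 ≤ y j) ∧ (∑ j, y j) ≤ 1

/-- A mixed strategy profile. -/
def IsMixed {n : ℕ} (x : Fin n → Fin n → ℝ) : Prop := ∀ i, IsStrat (x i)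

/-- Probability that the independent randomization `x` produces the pure profile `s`. -/
def prob {n : ℕ} (x : Fin n → Fin n → ℝ) (s : Fin n → Option (Fin n)) : ℝ :=
  ∏ i, (s i).elim (1 - ∑ j, x i j) (x i)

/-- Expected utility of agent `i` under the mixed profile `x`. -/
def util {n : ℕ} (u x : Fin n → Fin n → ℝ) (i : Fin n) : ℝ :=
  ∑ s : Fin n → Option (Fin n), prob x s * pureUtil u s i

/-- Expected social welfare of the mixed profile `x`. -/
def SW {n : ℕ} (u x : Fin n → Fin n → ℝ) : ℝ := ∑ i, util u x i

/-- The set of social-welfare values achievable by mixed profiles; `OPT` is its greatest element. -/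
def SWvals {n : ℕ} (u : Fin n → Fin n → ℝ) : Set ℝ :=
  {w | ∃ x, IsMixed x ∧ w = SW u x}

/-- `x` is an `ε`-Nash equilibrium. -/
def EpsNash {n : ℕ} (u : Fin n → Fin n → ℝ) (ε : ℝ) (x : Fin n → Fin n → ℝ) : Prop :=
  ∀ i y, IsStrat y → util u x i ≥ (1 - ε) * util u (Function.update x i y) i

/-- `x` is an (exact, mixed) Nash equilibrium. -/
def NashEq {n : ℕ} (u x : Fin n → Fin n → ℝ) : Prop :=
  ∀ i y, IsStrat y → util u x i ≥ util u (Function.update x i y) i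

/-!
By multilinearity the welfare of a mixed profile is an average of welfares of pure profiles, so a
best pure profile attains the optimum over mixed profiles too. Now let every agent with positive
utility delegate directly to her guru and every other agent vote herself. Gurus keep voting
themselves, so the former agents keep their gurus; each of the latter had utility at most zero and
is now her own guru, which is worth at least zero to her. Hence no agent loses, and the flattened
profile is a disjoint union of jolly stars.
-/

/-- The delegation graph of `s` is a disjoint union of jolly stars. A self-voter is the guru of her
own star, so only the other agents have to point, with positive utility, at a self-voter. -/
def IsJollyStars {n : ℕ} (u : Fin n → Fin n → ℝ) (s : Fin n → Option (Fin n)) : Prop :=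
  ∀ i, s i = some i ∨ ∃ j, j ≠ i ∧ s i = some j ∧ s j = some j ∧ 0 < u i j

/-- The mixed profile that plays the pure profile `s` with probability one. Abstention is the
residual probability, so the row of an abstaining agent vanishes. -/
def pureMixed {n : ℕ} (s : Fin n → Option (Fin n)) : Fin n → Fin n → ℝ :=
  fun i j => if s i = some j then 1 else 0

/-- The flattening of `s`, which turns any profile into jolly stars: an agent with positive utility
delegates directly to her guru, and every other agent, whether or not she has a guru, votes
herself. -/
noncomputable def starify {n : ℕ} (u : Fin n → Fin n → ℝ) (s : Fin n → Option (Fin n)) :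
    Fin n → Option (Fin n) :=
  fun i => if 0 < pureUtil u s i then guru s i else some i

section MixedProfiles

variable {n : ℕ} {u x : Fin n → Fin n → ℝ}

lemma sum_pureMixed (s : Fin n → Option (Fin n)) (i : Fin n) :
    ∑ j, pureMixed s i j = if s i = none then 0 else 1 := by
  unfold pureMixed
  cases s i <;> simp

lemma isMixed_pureMixed (s : Fin n → Option (Fin n)) : IsMixed (pureMixed s) := by
  refine fun i => ⟨fun j => ?_, ?_⟩
  · unfold pureMixed
    split_ifs <;> norm_num
  · rw [sum_pureMixed]
    split_ifs <;> norm_num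

lemma prob_pureMixed (s t : Fin n → Option (Fin n)) :
    prob (pureMixed s) t = if t = s then 1 else 0 := by
  have factor_eq (i : Fin n) : (t i).elim (1 - ∑ j, pureMixed s i j) (pureMixed s i) =
      if t i = s i then 1 else 0 := by
    rw [sum_pureMixed]
    unfold pureMixed
    cases t i <;> cases s i <;> simp [eq_comm]
  simp [prob, factor_eq, Finset.prod_ite_zero, funext_iff]

lemma prob_nonneg (hx : IsMixed x) (s : Fin n → Option (Fin n)) : 0 ≤ prob x s := by
  refine Finset.prod_nonneg fun i _ => ?_
  cases s i with
  | none => exact sub_nonneg.mpr (hx i).2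
  | some j => exact (hx i).1 j

lemma sum_prob (x : Fin n → Fin n → ℝ) : ∑ s, prob x s = 1 := by
  unfold prob
  rw [← Fintype.prod_sum fun i (o : Option (Fin n)) => o.elim (1 - ∑ j, x i j) (x i)]
  simp [Fintype.sum_option]

lemma sw_eq_sum_prob_mul (u x : Fin n → Fin n → ℝ) :
    SW u x = ∑ s, prob x s * ∑ i, pureUtil u s i := by
  unfold SW util
  rw [Finset.sum_comm]
  simp only [Finset.mul_sum]

lemma sw_pureMixed (u : Fin n → Fin n → ℝ) (s : Fin n → Option (Fin n)) :
    SW u (pureMixed s) = ∑ i, pureUtil u s i := by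
  simp [sw_eq_sum_prob_mul, prob_pureMixed]

lemma sw_le_of_forall_sum_pureUtil_le {w : ℝ} (hx : IsMixed x)
    (hw : ∀ s, ∑ i, pureUtil u s i ≤ w) : SW u x ≤ w :=
  calc SW u x = ∑ s, prob x s * ∑ i, pureUtil u s i := sw_eq_sum_prob_mul u x
    _ ≤ ∑ s, prob x s * w :=
      Finset.sum_le_sum fun s _ => mul_le_mul_of_nonneg_left (hw s) (prob_nonneg hx s)
    _ = w := by rw [← Finset.sum_mul, sum_prob, one_mul]

lemma isGreatest_swvals_of_forall_sum_pureUtil_le {s : Fin n → Option (Fin n)}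
    (hs : ∀ t, ∑ i, pureUtil u t i ≤ ∑ i, pureUtil u s i) :
    IsGreatest (SWvals u) (∑ i, pureUtil u s i) := by
  refine ⟨⟨pureMixed s, isMixed_pureMixed s, (sw_pureMixed u s).symm⟩, ?_⟩
  rintro _ ⟨x, hx, rfl⟩
  exact sw_le_of_forall_sum_pureUtil_le hx hs

end MixedProfiles

section Flattening

variable {n : ℕ} {u : Fin n → Fin n → ℝ} {s : Fin n → Option (Fin n)} {i g : Fin n}

lemma guru_eq_some_of_votes (hi : s i = some g) (hg : s g = some g) : guru s i = some g := by
  -- The `n` steps in the definition of `guru` include a first one because `Fin n` is inhabited.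
  obtain ⟨m, rfl⟩ := Nat.exists_eq_add_one.mpr i.pos
  have stays_at_g : (fun o => Option.bind o s)^[m] (some g) = some g :=
    Function.iterate_fixed hg m
  simp [guru, Function.iterate_succ_apply, hi, stays_at_g, hg]

lemma votes_of_guru_eq_some (h : guru s i = some g) : s g = some g := by
  obtain ⟨j, -, hj⟩ := Option.bind_eq_some_iff.mp h
  grind

lemma pureUtil_of_votes (hi : s i = some g) (hg : s g = some g) : pureUtil u s i = u i g := by
  simp [pureUtil, guru_eq_some_of_votes hi hg]

lemma exists_guru_of_pureUtil_pos (h : 0 < pureUtil u s i) :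
    ∃ g, guru s i = some g ∧ pureUtil u s i = u i g := by
  cases hg : guru s i with
  | none => simp [pureUtil, hg] at h
  | some g => exact ⟨g, rfl, by simp [pureUtil, hg]⟩

lemma starify_of_votes (hg : s g = some g) : starify u s g = some g := by
  unfold starify
  rw [guru_eq_some_of_votes hg hg, ite_self]

lemma starify_of_pureUtil_pos (h : 0 < pureUtil u s i) :
    ∃ g, starify u s i = some g ∧ starify u s g = some g ∧ pureUtil u s i = u i g := by
  obtain ⟨g, hg, hu⟩ := exists_guru_of_pureUtil_pos h
  exact ⟨g, by rw [starify, if_pos h, hg], starify_of_votes (votes_of_guru_eq_some hg), hu⟩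

lemma starify_of_pureUtil_nonpos (h : pureUtil u s i ≤ 0) : starify u s i = some i :=
  if_neg h.not_gt

lemma isJollyStars_starify (u : Fin n → Fin n → ℝ) (s : Fin n → Option (Fin n)) :
    IsJollyStars u (starify u s) := by
  intro i
  rcases lt_or_ge 0 (pureUtil u s i) with hpos | hnonpos
  · obtain ⟨g, hi, hg, hu⟩ := starify_of_pureUtil_pos hpos
    rcases eq_or_ne g i with rfl | hne
    · exact Or.inl hg
    · exact Or.inr ⟨g, hne, hi, hg, hu ▸ hpos⟩
  · exact Or.inl (starify_of_pureUtil_nonpos hnonpos)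

lemma pureUtil_le_pureUtil_starify (hu : 0 ≤ u i i) :
    pureUtil u s i ≤ pureUtil u (starify u s) i := by
  rcases lt_or_ge 0 (pureUtil u s i) with hpos | hnonpos
  · obtain ⟨g, hi, hg, hs⟩ := starify_of_pureUtil_pos hpos
    rw [hs, pureUtil_of_votes hi hg]
  · have hi := starify_of_pureUtil_nonpos hnonpos
    rw [pureUtil_of_votes hi hi]
    exact hnonpos.trans hu

end Flattening

theorem stmt5_general {n : ℕ} (u : Fin n → Fin n → ℝ) (hu : ∀ i, 0 ≤ u i i) :
    ∃ s : Fin n → Option (Fin n),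
      IsGreatest (SWvals u) (∑ i, pureUtil u s i) ∧ IsJollyStars u s := by
  obtain ⟨s, hs⟩ := Finite.exists_max fun s : Fin n → Option (Fin n) => ∑ i, pureUtil u s i
  have le_starify : ∑ i, pureUtil u s i ≤ ∑ i, pureUtil u (starify u s) i :=
    Finset.sum_le_sum fun i _ => pureUtil_le_pureUtil_starify (hu i)
  exact ⟨starify u s, isGreatest_swvals_of_forall_sum_pureUtil_le fun t => (hs t).trans le_starify,
    isJollyStars_starify u s⟩

/-- There is an optimal pure delegation graph that is a disjoint union of jolly
stars: every agent either votes herself, or delegates directly to a self-voting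
agent j with u i j > 0. -/
theorem stmt5 {n : ℕ} (u : Fin n → Fin n → ℝ) (hu : ∀ i j, 0 ≤ u i j ∧ u i j ≤ 1)
    (OPT : ℝ) (hOPT : IsGreatest (SWvals u) OPT) :
    ∃ s : Fin n → Option (Fin n),
      (∑ i, pureUtil u s i) = OPT ∧
      ∀ i, s i = some i ∨ ∃ j, j ≠ i ∧ s i = some j ∧ s j = some j ∧ 0 < u i j := by
  obtain ⟨s, hs, hjolly⟩ := stmt5_general u fun i => (hu i i).1
  exact ⟨s, hs.unique hOPT, hjolly⟩
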